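/- For every η > 0 there exists N₀ such that for all odd N = 2k + 1 ≥ N₀ the following holds. Let A be any sampling algorithm on inputs in {0,1}^N that forms a masked string y ∈ {0,1,⋆}^N by independently replacing each coordinate x_i with ⋆ with probability N^(-1/5) (and keeping it with probability 1 - N^(-1/5)), and then outputs a (possibly randomized) bit depending only on y. Let X be uniformly distributed on the set of strings in {0,1}^N having exactly k or exactly k + 1 ones. Then Pr[ A(X) = Majority(X) ] ≤ 1/2 + η, where Majority(X) = 1 if X has at least k + 1 ones and 0 otherwise. -/

import Mathlib

/-- The number of ones in a boolean string. -/
def wt {N : ℕ} (x : Fin N → Bool) : ℕ := (Finset.univ.filter fun i => x i = true).card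

/-- The majority function: `1` iff more than half the bits are `1`
(for `N = 2k + 1`, iff at least `k + 1` bits are `1`). -/
def maj {N : ℕ} (x : Fin N → Bool) : Bool := decide (N < 2 * wt x)

/-- The masked string `y ∈ {0,1,⋆}^N` obtained from `x` by keeping exactly the
coordinates in `S` (a `⋆` is modelled as `none`). -/
def mask {N : ℕ} (x : Fin N → Bool) (S : Finset (Fin N)) : Fin N → Option Bool :=
  fun i => if i ∈ S then some (x i) else none

lemma cb_upper (j : ℕ) : (Nat.centralBinom j) ^ 2 * (2 * j + 1) ≤ 16 ^ j := by
  induction j with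
  | zero => simp
  | succ j ih =>
    have h := Nat.succ_mul_centralBinom_succ j
    set B := Nat.centralBinom j
    set B' := Nat.centralBinom (j + 1)
    have h2 : (j + 1) ^ 2 * (B' ^ 2 * (2 * (j + 1) + 1)) =
        4 * (2 * j + 1) * (2 * j + 3) * (B ^ 2 * (2 * j + 1)) := by
      calc _ = ((j + 1) * B') ^ 2 * (2 * j + 3) := by ring
        _ = _ := by rw [h]; ring
    have h3 : (j + 1) ^ 2 * (B' ^ 2 * (2 * (j + 1) + 1)) ≤ (j + 1) ^ 2 * 16 ^ (j + 1) := by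
      rw [h2]
      calc _ ≤ (16 * (j + 1) ^ 2) * 16 ^ j := by
            apply Nat.mul_le_mul _ ih
            nlinarith
        _ = _ := by ring
    exact Nat.le_of_mul_le_mul_left h3 (by positivity)

lemma cb_lower (j : ℕ) : 16 ^ (j + 1) ≤ (Nat.centralBinom (j + 1)) ^ 2 * (4 * (j + 1)) := by
  induction j with
  | zero => decide
  | succ j ih =>
    have h := Nat.succ_mul_centralBinom_succ (j + 1)
    set B := Nat.centralBinom (j + 1)
    set B' := Nat.centralBinom (j + 1 + 1)
    have h2 : (j + 2) ^ 2 * (B' ^ 2 * (4 * (j + 1 + 1))) =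
        4 * (2 * j + 3) ^ 2 * (j + 2) * (4 * B ^ 2) := by
      calc _ = ((j + 1 + 1) * B') ^ 2 * (4 * (j + 2)) := by ring
        _ = _ := by rw [h]; ring
    have h3 : (j + 2) ^ 2 * 16 ^ (j + 1 + 1) ≤ (j + 2) ^ 2 * (B' ^ 2 * (4 * (j + 1 + 1))) := by
      rw [h2]
      calc (j + 2) ^ 2 * 16 ^ (j + 1 + 1) = 16 * (j + 2) ^ 2 * 16 ^ (j + 1) := by ring
        _ ≤ 16 * (j + 2) ^ 2 * (B ^ 2 * (4 * (j + 1))) := Nat.mul_le_mul_left _ ih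
        _ = (16 * (j + 2) * (j + 1)) * (j + 2) * (4 * B ^ 2) := by ring
        _ ≤ _ := by
          apply Nat.mul_le_mul_right
          apply Nat.mul_le_mul_right
          nlinarith
    exact Nat.le_of_mul_le_mul_left h3 (by positivity)

lemma cb_odd (j : ℕ) : Nat.centralBinom (j + 1) = 2 * (2 * j + 1).choose j := by
  rw [Nat.centralBinom_eq_two_mul_choose, show 2 * (j + 1) = 2 * j + 1 + 1 by ring,
    Nat.choose_succ_succ, Nat.choose_symm_half]
  ring

lemma mid_upper (n : ℕ) : (n.choose (n / 2)) ^ 2 * (n + 1) ≤ 4 ^ n := by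
  rcases Nat.even_or_odd' n with ⟨j, rfl | rfl⟩
  · have h := cb_upper j
    rw [Nat.centralBinom_eq_two_mul_choose] at h
    rw [Nat.mul_div_cancel_left _ (by norm_num), pow_mul]
    exact h
  · have h := cb_upper (j + 1)
    rw [cb_odd] at h
    rw [show (2 * j + 1) / 2 = j by omega]
    have : (4 : ℕ) ^ (2 * j + 1) * 4 = 16 ^ (j + 1) := by
      rw [show (16 : ℕ) = 4 ^ 2 by norm_num, ← pow_mul]; ring
    nlinarith [sq_nonneg ((2 * j + 1).choose j)]

lemma mid_lower (k : ℕ) : 4 ^ (2 * k + 1) ≤ ((2 * k + 1).choose k) ^ 2 * (2 * (2 * k + 2)) := by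
  have h := cb_lower k
  rw [cb_odd] at h
  have : (4 : ℕ) ^ (2 * k + 1) * 4 = 16 ^ (k + 1) := by
    rw [show (16 : ℕ) = 4 ^ 2 by norm_num, ← pow_mul]; ring
  nlinarith

lemma ratio_sq (k m u : ℕ) (h : m + u = 2 * k + 1) :
    (((m.choose (m / 2) : ℝ) * (u.choose (u / 2))) / ((2 * k + 1).choose k)) ^ 2 ≤
      2 * (1 / ((m : ℝ) + 1) + 1 / ((u : ℝ) + 1)) := by
  have hm : ((m.choose (m / 2) : ℝ)) ^ 2 * (m + 1) ≤ 4 ^ m := by exact_mod_cast mid_upper m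
  have hu : ((u.choose (u / 2) : ℝ)) ^ 2 * (u + 1) ≤ 4 ^ u := by exact_mod_cast mid_upper u
  have hk : (4 : ℝ) ^ (2 * k + 1) ≤ (((2 * k + 1).choose k : ℝ)) ^ 2 * (2 * (2 * k + 2)) := by
    exact_mod_cast mid_lower k
  have hC : (0 : ℝ) < ((2 * k + 1).choose k : ℝ) := by
    exact_mod_cast Nat.choose_pos (by omega)
  have hN : (m : ℝ) + u = 2 * k + 1 := by exact_mod_cast h
  have hmul := mul_le_mul hm hu (by positivity) (by positivity)
  rw [← pow_add, h] at hmul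
  have h3 := hmul.trans hk
  set A : ℝ := (m.choose (m / 2) : ℝ)
  set B : ℝ := (u.choose (u / 2) : ℝ)
  set C : ℝ := ((2 * k + 1).choose k : ℝ)
  rw [show 2 * (1 / ((m : ℝ) + 1) + 1 / ((u : ℝ) + 1)) =
    2 * (m + u + 2) / ((m + 1) * (u + 1)) by field_simp; ring, div_pow,
    div_le_div_iff₀ (by positivity) (by positivity), hN]
  nlinarith [sq_nonneg C]

lemma choose_anti (u n : ℕ) (h : u / 2 ≤ n) : u.choose (n + 1) ≤ u.choose n := by
  have h1 := Nat.choose_succ_right_eq u n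
  have h2 : u - n ≤ n + 1 := by omega
  have h3 : u.choose (n + 1) * (n + 1) ≤ u.choose n * (n + 1) := by
    rw [h1]; exact Nat.mul_le_mul_left _ h2
  exact Nat.le_of_mul_le_mul_right h3 (by omega)

lemma tele (u n : ℕ) :
    1 + ∑ j ∈ Finset.range n, max 0 ((u.choose (j + 1) : ℝ) - u.choose j) =
      u.choose (min n (u / 2)) := by
  induction n with
  | zero => simp
  | succ n ih =>
    rw [Finset.sum_range_succ, ← add_assoc, ih]
    by_cases h : n < u / 2
    · have h1 : (u.choose n : ℝ) ≤ u.choose (n + 1) := by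
        exact_mod_cast Nat.choose_le_succ_of_lt_half_left h
      rw [max_eq_right (by linarith), min_eq_left h.le, min_eq_left (by omega)]
      ring
    · have h1 : (u.choose (n + 1) : ℝ) ≤ u.choose n := by
        exact_mod_cast choose_anti u n (by omega)
      rw [max_eq_left (by linarith), min_eq_right (by omega), min_eq_right (by omega)]
      ring

def cnt (u a n : ℕ) : ℝ := if a ≤ n then (u.choose (n - a) : ℝ) else 0

lemma cnt_sum (u k M : ℕ) :
    ∑ a ∈ Finset.range M, max 0 (cnt u a (k + 1) - cnt u a k) ≤ u.choose (u / 2) := by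
  have h1 : ∑ a ∈ Finset.range M, max 0 (cnt u a (k + 1) - cnt u a k) ≤
      ∑ a ∈ Finset.range (M + (k + 2)), max 0 (cnt u a (k + 1) - cnt u a k) := by
    apply Finset.sum_le_sum_of_subset_of_nonneg
    · intro a; simp; omega
    · intros; exact le_max_left _ _
  have h2 : ∑ a ∈ Finset.range (M + (k + 2)), max 0 (cnt u a (k + 1) - cnt u a k) =
      ∑ a ∈ Finset.range (k + 2), max 0 (cnt u a (k + 1) - cnt u a k) := by
    symm
    apply Finset.sum_subset
    · intro a; simp; omega
    · intro a _ ha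
      simp only [Finset.mem_range] at ha
      simp [cnt, show ¬ a ≤ k + 1 by omega, show ¬ a ≤ k by omega]
  have h3 : ∑ a ∈ Finset.range (k + 2), max 0 (cnt u a (k + 1) - cnt u a k) =
      1 + ∑ j ∈ Finset.range (k + 1), max 0 ((u.choose (j + 1) : ℝ) - u.choose j) := by
    rw [Finset.sum_range_succ, ← Finset.sum_range_reflect, add_comm]
    congr 1
    · simp [cnt]
    · apply Finset.sum_congr rfl
      intro j hj
      simp only [Finset.mem_range] at hj
      simp only [cnt]
      rw [if_pos (by omega), if_pos (by omega), show k + 1 - (k + 1 - 1 - j) = j + 1 by omega,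
        show k - (k + 1 - 1 - j) = j by omega]
  rw [h2, h3, tele] at h1
  refine h1.trans ?_
  exact_mod_cast Nat.choose_le_middle _ _

lemma count_w {N : ℕ} (W : Finset (Fin N)) (a n : ℕ) :
    ∑ w ∈ W.powerset, (if a + w.card = n then (1 : ℝ) else 0) = cnt W.card a n := by
  rw [Finset.sum_boole, cnt]
  split_ifs with h
  · rw [← Finset.card_powersetCard]
    congr 2
    ext w
    simp only [Finset.mem_filter, Finset.mem_powerset, Finset.mem_powersetCard]
    constructor
    · rintro ⟨h1, h2⟩; exact ⟨h1, by omega⟩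
    · rintro ⟨h1, h2⟩; exact ⟨h1, by omega⟩
  · rw [Finset.filter_false_of_mem]
    · simp
    · intros; omega

lemma split_sum {N : ℕ} (S : Finset (Fin N)) (g : (Fin N → Option Bool) → ℝ) (n : ℕ) :
    ∑ x ∈ Finset.univ.filter (fun x : Fin N → Bool => wt x = n), g (mask x S) =
      ∑ z ∈ S.powerset, g (mask (fun i => decide (i ∈ z)) S) * cnt Sᶜ.card z.card n := by
  have h : ∀ z : Finset (Fin N), g (mask (fun i => decide (i ∈ z)) S) * cnt Sᶜ.card z.card n =
      ∑ w ∈ Sᶜ.powerset, if z.card + w.card = n then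
        g (mask (fun i => decide (i ∈ z)) S) else 0 := by
    intro z
    rw [← count_w, Finset.mul_sum]
    apply Finset.sum_congr rfl
    intros; split_ifs <;> simp
  rw [Finset.sum_congr rfl (fun z _ => h z), ← Finset.sum_product', Finset.sum_filter]
  refine Finset.sum_nbij'
    (fun x => (S.filter (fun i => x i = true), Sᶜ.filter (fun i => x i = true)))
    (fun p i => decide (i ∈ p.1 ∨ i ∈ p.2)) ?_ ?_ ?_ ?_ ?_
  · intro x _
    simp [Finset.filter_subset]
  · simp
  · intro x _
    funext i
    by_cases hi : i ∈ S <;> simp [hi]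
  · rintro ⟨z, w⟩ hp
    simp only [Finset.mem_product, Finset.mem_powerset] at hp
    obtain ⟨hz, hw⟩ := hp
    have hw' : ∀ i ∈ w, i ∉ S := fun i hi => by simpa using hw hi
    ext i
    · simp only [Finset.mem_filter, decide_eq_true_eq]
      constructor
      · rintro ⟨h1, h2 | h2⟩
        · exact h2
        · exact absurd h1 (hw' i h2)
      · intro h1; exact ⟨hz h1, Or.inl h1⟩
    · simp only [Finset.mem_filter, decide_eq_true_eq, Finset.mem_compl]
      constructor
      · rintro ⟨h1, h2 | h2⟩
        · exact absurd (hz h2) h1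
        · exact h2
      · intro h1; exact ⟨hw' i h1, Or.inr h1⟩
  · intro x _
    have hw : (S.filter (fun i => x i = true)).card + (Sᶜ.filter (fun i => x i = true)).card =
        wt x := by
      rw [wt, ← Finset.card_union_of_disjoint, ← Finset.filter_union, Finset.union_compl]
      exact Finset.disjoint_filter_filter disjoint_compl_right
    have hm : mask (fun i => decide (i ∈ S.filter (fun i => x i = true))) S = mask x S := by
      funext i
      by_cases hi : i ∈ S <;> simp [mask, hi]
    simp only [hw, hm]

lemma diff_bound {N : ℕ} (S : Finset (Fin N)) (g : (Fin N → Option Bool) → ℝ)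
    (hg : ∀ y, 0 ≤ g y ∧ g y ≤ 1) (k : ℕ) :
    ∑ x ∈ Finset.univ.filter (fun x : Fin N → Bool => wt x = k + 1), g (mask x S) -
      ∑ x ∈ Finset.univ.filter (fun x : Fin N → Bool => wt x = k), g (mask x S) ≤
      (S.card.choose (S.card / 2) : ℝ) * (Sᶜ.card.choose (Sᶜ.card / 2)) := by
  rw [split_sum, split_sum, ← Finset.sum_sub_distrib]
  calc _ ≤ ∑ z ∈ S.powerset, max 0 (cnt Sᶜ.card z.card (k + 1) - cnt Sᶜ.card z.card k) := by
        apply Finset.sum_le_sum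
        intro z _
        rw [← mul_sub]
        obtain ⟨h0, h1⟩ := hg (mask (fun i => decide (i ∈ z)) S)
        calc _ ≤ g (mask (fun i => decide (i ∈ z)) S) *
              max 0 (cnt Sᶜ.card z.card (k + 1) - cnt Sᶜ.card z.card k) :=
              mul_le_mul_of_nonneg_left (le_max_right _ _) h0
          _ ≤ _ := mul_le_of_le_one_left (le_max_left _ _) h1
    _ = ∑ a ∈ Finset.range (S.card + 1), S.card.choose a •
          max 0 (cnt Sᶜ.card a (k + 1) - cnt Sᶜ.card a k) :=
        Finset.sum_powerset_apply_card
          (fun a => max 0 (cnt Sᶜ.card a (k + 1) - cnt Sᶜ.card a k)) (x := S)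
    _ ≤ ∑ a ∈ Finset.range (S.card + 1), (S.card.choose (S.card / 2) : ℝ) *
          max 0 (cnt Sᶜ.card a (k + 1) - cnt Sᶜ.card a k) := by
        apply Finset.sum_le_sum
        intro a _
        rw [nsmul_eq_mul]
        apply mul_le_mul_of_nonneg_right _ (le_max_left _ _)
        exact_mod_cast Nat.choose_le_middle _ _
    _ ≤ _ := by
        rw [← Finset.mul_sum]
        exact mul_le_mul_of_nonneg_left (cnt_sum _ _ _) (by positivity)

lemma card_wt (N n : ℕ) :
    (Finset.univ.filter (fun x : Fin N → Bool => wt x = n)).card = N.choose n := by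
  have h := split_sum (N := N) ∅ (fun _ => 1) n
  simp [cnt] at h
  exact_mod_cast h

lemma inv_moment (N : ℕ) (p q : ℝ) (hp : 0 < p) (hq : 0 ≤ q) (h : p + q = 1) :
    ∑ S : Finset (Fin N), p ^ S.card * q ^ Sᶜ.card * (1 / ((S.card : ℝ) + 1)) ≤
      1 / (((N : ℝ) + 1) * p) := by
  have h1 := Finset.sum_powerset_apply_card
    (fun j => p ^ j * q ^ (N - j) * (1 / ((j : ℝ) + 1))) (x := (Finset.univ : Finset (Fin N)))
  simp only [Finset.powerset_univ, Finset.card_univ, Fintype.card_fin, nsmul_eq_mul] at h1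
  have h2 : ∑ S : Finset (Fin N), p ^ S.card * q ^ Sᶜ.card * (1 / ((S.card : ℝ) + 1)) =
      ∑ S : Finset (Fin N), p ^ S.card * q ^ (N - S.card) * (1 / ((S.card : ℝ) + 1)) := by
    apply Finset.sum_congr rfl
    intro S _
    rw [Finset.card_compl, Fintype.card_fin]
  rw [h2, h1, le_div_iff₀ (by positivity), Finset.sum_mul]
  have h3 := add_pow p q (N + 1)
  rw [h, one_pow, Finset.sum_range_succ'] at h3
  have h4 : ∀ j ∈ Finset.range (N + 1),
      (N.choose j : ℝ) * (p ^ j * q ^ (N - j) * (1 / ((j : ℝ) + 1))) * (((N : ℝ) + 1) * p) =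
      p ^ (j + 1) * q ^ (N + 1 - (j + 1)) * ((N + 1).choose (j + 1) : ℝ) := by
    intro j _
    have h5 : ((N : ℝ) + 1) * N.choose j = (N + 1).choose (j + 1) * ((j : ℝ) + 1) := by
      exact_mod_cast Nat.add_one_mul_choose_eq N j
    rw [Nat.add_sub_add_right]
    have : (j : ℝ) + 1 ≠ 0 := by positivity
    field_simp
    rw [pow_succ]
    linear_combination (p ^ j * p * q ^ (N - j)) * h5
  rw [Finset.sum_congr rfl h4]
  have : 0 ≤ p ^ 0 * q ^ (N + 1 - 0) * ((N + 1).choose 0 : ℝ) := by positivity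
  linarith

lemma total_prob (N : ℕ) (p q : ℝ) (h : p + q = 1) :
    ∑ S : Finset (Fin N), p ^ S.card * q ^ Sᶜ.card = 1 := by
  have := Fintype.sum_pow_mul_eq_add_pow (Fin N) p q
  rw [h, one_pow] at this
  rw [← this]
  apply Finset.sum_congr rfl
  intro S _
  rw [Finset.card_compl]

lemma main_bound (N k : ℕ) (hN : N = 2 * k + 1) (g : (Fin N → Option Bool) → ℝ)
    (hg : ∀ y, 0 ≤ g y ∧ g y ≤ 1) (p q η : ℝ) (hp : 0 < p) (hq : 0 < q) (h : p + q = 1)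
    (hη : 0 < η) :
    (1 / ((Finset.univ.filter fun x : Fin N → Bool =>
              wt x = k ∨ wt x = k + 1).card : ℝ)) *
          ∑ x ∈ Finset.univ.filter fun x : Fin N → Bool => wt x = k ∨ wt x = k + 1,
            ∑ S : Finset (Fin N),
              p ^ S.card * q ^ Sᶜ.card *
                (if maj x = true then g (mask x S) else 1 - g (mask x S)) ≤
        1 / 2 + η / 2 + 1 / (4 * η) * (1 / (((N : ℝ) + 1) * p) + 1 / (((N : ℝ) + 1) * q)) := by
  have hdis : Disjoint (Finset.univ.filter fun x : Fin N → Bool => wt x = k)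
      (Finset.univ.filter fun x : Fin N → Bool => wt x = k + 1) := by
    apply Finset.disjoint_filter.2
    intros; omega
  have hsym : N.choose (k + 1) = N.choose k := by
    rw [hN]; exact Nat.choose_symm_half k
  set C : ℝ := (N.choose k : ℝ) with hCdef
  have hC : 0 < C := by
    rw [hCdef]; exact_mod_cast Nat.choose_pos (by omega)
  rw [Finset.filter_or, Finset.card_union_of_disjoint hdis, card_wt, card_wt, hsym,
    Finset.sum_comm]
  have hS : ∀ S : Finset (Fin N),
      ∑ x ∈ (Finset.univ.filter fun x : Fin N → Bool => wt x = k) ∪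
        (Finset.univ.filter fun x : Fin N → Bool => wt x = k + 1),
        p ^ S.card * q ^ Sᶜ.card * (if maj x = true then g (mask x S) else 1 - g (mask x S)) ≤
      C * (p ^ S.card * q ^ Sᶜ.card * (1 + η + 1 / (2 * η) *
        (1 / ((S.card : ℝ) + 1) + 1 / ((Sᶜ.card : ℝ) + 1)))) := by
    intro S
    rw [← Finset.mul_sum, Finset.sum_union hdis, mul_left_comm]
    apply mul_le_mul_of_nonneg_left _ (by positivity)
    have e1 : ∑ x ∈ Finset.univ.filter (fun x : Fin N → Bool => wt x = k),
        (if maj x = true then g (mask x S) else 1 - g (mask x S)) =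
        C - ∑ x ∈ Finset.univ.filter (fun x : Fin N → Bool => wt x = k), g (mask x S) := by
      rw [hCdef, ← card_wt N k, Finset.card_eq_sum_ones, Nat.cast_sum, ← Finset.sum_sub_distrib]
      apply Finset.sum_congr rfl
      intro x hx
      simp only [Finset.mem_filter, Finset.mem_univ, true_and] at hx
      have : ¬ (maj x = true) := by simp [maj, hx]; omega
      rw [if_neg this]; simp
    have e2 : ∑ x ∈ Finset.univ.filter (fun x : Fin N → Bool => wt x = k + 1),
        (if maj x = true then g (mask x S) else 1 - g (mask x S)) =
        ∑ x ∈ Finset.univ.filter (fun x : Fin N → Bool => wt x = k + 1), g (mask x S) := by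
      apply Finset.sum_congr rfl
      intro x hx
      simp only [Finset.mem_filter, Finset.mem_univ, true_and] at hx
      have : maj x = true := by simp [maj, hx]; omega
      rw [if_pos this]
    rw [e1, e2]
    have hd := diff_bound S g hg k
    have hmu : S.card + Sᶜ.card = 2 * k + 1 := by
      rw [Finset.card_add_card_compl, Fintype.card_fin, hN]
    have hr := ratio_sq k S.card Sᶜ.card hmu
    rw [← hN, ← hCdef] at hr
    set A : ℝ := (S.card.choose (S.card / 2) : ℝ) * (Sᶜ.card.choose (Sᶜ.card / 2)) with hA
    set D : ℝ := 1 / ((S.card : ℝ) + 1) + 1 / ((Sᶜ.card : ℝ) + 1) with hD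
    have hAC : A = C * (A / C) := by field_simp
    set r := A / C
    have hr2 : r ≤ η + 1 / (2 * η) * D := by
      have : r ≤ η + r ^ 2 / (4 * η) := by
        rw [← sub_nonneg, show η + r ^ 2 / (4 * η) - r = (r - 2 * η) ^ 2 / (4 * η) by
          field_simp; ring]
        positivity
      have h2 : r ^ 2 / (4 * η) ≤ 2 * D / (4 * η) := by gcongr
      have h3 : 2 * D / (4 * η) = 1 / (2 * η) * D := by field_simp; ring
      linarith
    have := mul_le_mul_of_nonneg_left hr2 hC.le
    linarith
  have hsum := Finset.sum_le_sum (fun S (_ : S ∈ (Finset.univ : Finset (Finset (Fin N)))) => hS S)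
  have hm1 := inv_moment N p q hp hq.le h
  have hm2 : ∑ S : Finset (Fin N), p ^ S.card * q ^ Sᶜ.card * (1 / ((Sᶜ.card : ℝ) + 1)) ≤
      1 / (((N : ℝ) + 1) * q) := by
    refine le_trans (le_of_eq ?_) (inv_moment N q p hq hp.le (by linarith))
    refine Finset.sum_nbij' (fun S => Sᶜ) (fun S => Sᶜ) ?_ ?_ ?_ ?_ ?_
    · simp
    · simp
    · simp
    · simp
    · intro S _
      simp only [compl_compl]
      ring
  have ht := total_prob N p q h
  rw [← Finset.mul_sum] at hsum
  have hfin : ∑ S : Finset (Fin N), (p ^ S.card * q ^ Sᶜ.card * (1 + η + 1 / (2 * η) *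
        (1 / ((S.card : ℝ) + 1) + 1 / ((Sᶜ.card : ℝ) + 1)))) ≤
      1 + η + 1 / (2 * η) * (1 / (((N : ℝ) + 1) * p) + 1 / (((N : ℝ) + 1) * q)) := by
    have : ∀ S : Finset (Fin N), (p ^ S.card * q ^ Sᶜ.card * (1 + η + 1 / (2 * η) *
        (1 / ((S.card : ℝ) + 1) + 1 / ((Sᶜ.card : ℝ) + 1)))) =
        (1 + η) * (p ^ S.card * q ^ Sᶜ.card) + 1 / (2 * η) *
          (p ^ S.card * q ^ Sᶜ.card * (1 / ((S.card : ℝ) + 1)) +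
          p ^ S.card * q ^ Sᶜ.card * (1 / ((Sᶜ.card : ℝ) + 1))) := by
      intro S; ring
    rw [Finset.sum_congr rfl (fun S _ => this S), Finset.sum_add_distrib, ← Finset.mul_sum,
      ← Finset.mul_sum, Finset.sum_add_distrib, ht, mul_one]
    gcongr
  push_cast
  rw [← hCdef, one_div, inv_mul_le_iff₀ (by positivity)]
  refine hsum.trans ((mul_le_mul_of_nonneg_left hfin hC.le).trans (le_of_eq ?_))
  field_simp
  ring

/-- For every `η > 0` there is `N₀` such that for all odd `N = 2k + 1 ≥ N₀`:
for any sampling algorithm that independently replaces each coordinate by `⋆` with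
probability `N^(-1/5)` (keeping it with probability `1 - N^(-1/5)`) and then outputs
a randomized bit `g y` depending only on the masked string `y`, if `X` is uniform on
the strings with exactly `k` or exactly `k + 1` ones, then
`Pr[A(X) = Majority(X)] ≤ 1/2 + η`. -/
theorem sampling_cannot_compute_majority :
    ∀ η : ℝ, 0 < η → ∃ N₀ : ℕ, ∀ N k : ℕ, N = 2 * k + 1 → N₀ ≤ N →
      ∀ g : (Fin N → Option Bool) → ℝ, (∀ y, 0 ≤ g y ∧ g y ≤ 1) →
        (1 / ((Finset.univ.filter fun x : Fin N → Bool =>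
              wt x = k ∨ wt x = k + 1).card : ℝ)) *
          ∑ x ∈ Finset.univ.filter fun x : Fin N → Bool => wt x = k ∨ wt x = k + 1,
            ∑ S : Finset (Fin N),
              (1 - (N : ℝ) ^ (-(1 / 5) : ℝ)) ^ S.card *
                ((N : ℝ) ^ (-(1 / 5) : ℝ)) ^ Sᶜ.card *
                (if maj x = true then g (mask x S) else 1 - g (mask x S)) ≤
        1 / 2 + η := by
  intro η hη
  have t1 : Filter.Tendsto (fun n : ℕ => (n : ℝ) ^ (-(1 / 5) : ℝ)) Filter.atTop (nhds 0) :=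
    (tendsto_rpow_neg_atTop (by norm_num)).comp tendsto_natCast_atTop_atTop
  have t2 : Filter.Tendsto (fun n : ℕ => (n : ℝ) ^ (-(4 / 5) : ℝ)) Filter.atTop (nhds 0) :=
    (tendsto_rpow_neg_atTop (by norm_num)).comp tendsto_natCast_atTop_atTop
  have e1 := t1.eventually (ge_mem_nhds (show (0 : ℝ) < 1 / 2 by norm_num))
  have e2 := t2.eventually (ge_mem_nhds (show (0 : ℝ) < η ^ 2 by positivity))
  obtain ⟨N₀, hN₀⟩ := Filter.eventually_atTop.1 (e1.and e2)
  refine ⟨N₀, ?_⟩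
  intro N k hN hle g hg
  obtain ⟨h1, h2⟩ := hN₀ N hle
  have hNpos : (0 : ℝ) < N := by
    have : 0 < N := by omega
    exact_mod_cast this
  have hq : 0 < (N : ℝ) ^ (-(1 / 5) : ℝ) := Real.rpow_pos_of_pos hNpos _
  have hNq : (N : ℝ) ^ (-(4 / 5) : ℝ) = 1 / ((N : ℝ) * (N : ℝ) ^ (-(1 / 5) : ℝ)) := by
    rw [eq_div_iff (by positivity), ← mul_assoc]
    nth_rewrite 2 [← Real.rpow_one (N : ℝ)]
    rw [← Real.rpow_add hNpos, ← Real.rpow_add hNpos]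
    norm_num
  rw [hNq] at h2
  set q := (N : ℝ) ^ (-(1 / 5) : ℝ)
  refine (main_bound N k hN g hg (1 - q) q η (by linarith) hq (by ring) hη).trans ?_
  have b1 : 1 / (((N : ℝ) + 1) * q) ≤ 1 / (N * q) := by gcongr; linarith
  have b2 : 1 / (((N : ℝ) + 1) * (1 - q)) ≤ 1 / (N * q) := by
    gcongr <;> linarith
  have b3 : 1 / (4 * η) * (1 / (((N : ℝ) + 1) * (1 - q)) + 1 / (((N : ℝ) + 1) * q)) ≤
      1 / (4 * η) * (2 * η ^ 2) := by
    gcongr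
    linarith
  have b4 : 1 / (4 * η) * (2 * η ^ 2) = η / 2 := by field_simp; ring
  linarith
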